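/- Let L be a set closed under binary operations ∧, ∨, → and a unary operation ¬, and let C : 2^L → 2^L satisfy Inclusion, Idempotence, Cautious Monotonicity, and the rules: C(A ∪ {a ∧ b}) = C(A ∪ {a, b}); C(A ∪ {a, ¬a}) = L; C(A ∪ {¬a}) = L implies a ∈ C(A); C(A ∪ {a}) ∩ C(A ∪ {b}) ⊆ C(A ∪ {a ∨ b}); a ∈ C(A) implies a ∨ b ∈ C(A), and b ∈ C(A) implies a ∨ b ∈ C(A); b ∈ C(A ∪ {a}) implies a → b ∈ C(A); b ∈ C(A ∪ {a, a → b}). Then every maximal consistent set A satisfies: (1) A = C(A); (2) a ∧ b ∈ A iff a ∈ A and b ∈ A; (3) ¬a ∈ A iff a ∉ A; (4) a ∨ b ∈ A iff a ∈ A or b ∈ A; (5) a → b ∉ A iff a ∈ A and b ∉ A. -/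

import Mathlib

/-- Every maximal consistent set is a theory and decides the connectives
classically, given the Introduction-Elimination rules. -/
theorem stmt_17 {L : Type}
    (conj disj impl : L → L → L) (neg : L → L)
    (C : Set L → Set L)
    (hIncl : ∀ A : Set L, A ⊆ C A)
    (hIdem : ∀ A : Set L, C (C A) = C A)
    (hCM : ∀ A B : Set L, A ⊆ B → B ⊆ C A → C A ⊆ C B)
    (hAnd : ∀ (A : Set L) (a b : L), C (A ∪ {conj a b}) = C (A ∪ {a, b}))
    (hNegI : ∀ (A : Set L) (a : L), C (A ∪ {a, neg a}) = Set.univ)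
    (hNegE : ∀ (A : Set L) (a : L), C (A ∪ {neg a}) = Set.univ → a ∈ C A)
    (hOrL : ∀ (A : Set L) (a b : L),
      C (A ∪ {a}) ∩ C (A ∪ {b}) ⊆ C (A ∪ {disj a b}))
    (hOrR₁ : ∀ (A : Set L) (a b : L), a ∈ C A → disj a b ∈ C A)
    (hOrR₂ : ∀ (A : Set L) (a b : L), b ∈ C A → disj a b ∈ C A)
    (hImpR : ∀ (A : Set L) (a b : L), b ∈ C (A ∪ {a}) → impl a b ∈ C A)
    (hImpL : ∀ (A : Set L) (a b : L), b ∈ C (A ∪ {a, impl a b})) :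
    ∀ A : Set L,
      (C A ≠ Set.univ ∧ ∀ B : Set L, A ⊂ B → C B = Set.univ) →
      (A = C A ∧
       (∀ a b : L, conj a b ∈ A ↔ a ∈ A ∧ b ∈ A) ∧
       (∀ a : L, neg a ∈ A ↔ a ∉ A) ∧
       (∀ a b : L, disj a b ∈ A ↔ a ∈ A ∨ b ∈ A) ∧
       (∀ a b : L, impl a b ∉ A ↔ a ∈ A ∧ b ∉ A)) := by
  rintro A ⟨hcons, hmax⟩
  have hA : C A = A := by
    by_contra hne
    have h1 := hmax (C A) ((hIncl A).ssubset_of_ne (fun h => hne h.symm))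
    rw [hIdem] at h1
    exact hcons h1
  have hout : ∀ S : Set L, ∀ x ∈ S, x ∉ A → C (A ∪ S) = Set.univ := by
    intro S x hxS hxA
    apply hmax
    exact ⟨Set.subset_union_left, fun h => hxA (h (Or.inr hxS))⟩
  have hin : ∀ S : Set L, S ⊆ A → C (A ∪ S) = A := by
    intro S hS
    rw [Set.union_eq_self_of_subset_right hS, hA]
  have hAne : A ≠ Set.univ := fun h => hcons (hA.trans h)
  have hin1 : ∀ x ∈ A, C (A ∪ {x}) = A := fun x hx =>
    hin _ (Set.singleton_subset_iff.2 hx)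
  have hin2 : ∀ x ∈ A, ∀ y ∈ A, C (A ∪ {x, y}) = A := fun x hx y hy =>
    hin _ (Set.pair_subset hx hy)
  have hout1 : ∀ x, x ∉ A → C (A ∪ {x}) = Set.univ := fun x hx =>
    hout _ x rfl hx
  refine ⟨hA.symm, ?_, ?_, ?_, ?_⟩
  · intro a b
    constructor
    · intro h
      have h1 := hin1 _ h
      rw [hAnd] at h1
      constructor
      · by_contra ha
        exact hAne (h1.symm.trans (hout _ a (by simp) ha))
      · by_contra hb
        exact hAne (h1.symm.trans (hout _ b (by simp) hb))
    · rintro ⟨ha, hb⟩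
      by_contra h
      have h1 := hout1 _ h
      rw [hAnd, hin2 a ha b hb] at h1
      exact hAne h1
  · intro a
    constructor
    · intro hn ha
      exact hAne ((hin2 a ha _ hn).symm.trans (hNegI A a))
    · intro ha
      by_contra hn
      exact ha (hA ▸ hNegE A a (hout1 _ hn))
  · intro a b
    constructor
    · intro h
      by_contra! hab
      have h1 := hOrL A a b
      rw [hout1 a hab.1, hout1 b hab.2, hin1 _ h, Set.inter_self] at h1
      exact hAne (Set.univ_subset_iff.1 h1)
    · rintro (h | h)
      · have := hOrR₁ A a b (hIncl A h)
        rwa [hA] at this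
      · have := hOrR₂ A a b (hIncl A h)
        rwa [hA] at this
  · intro a b
    have hI := hImpR A a b
    rw [hA] at hI
    constructor
    · intro h
      have ha : a ∈ A := by
        by_contra ha
        exact h (hI (by rw [hout1 a ha]; trivial))
      exact ⟨ha, fun hb => h (hI (by rw [hin1 a ha]; exact hb))⟩
    · rintro ⟨ha, hb⟩ h
      have h1 := hImpL A a b
      rw [hin2 a ha _ h] at h1
      exact hb h1
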